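/- arXiv:1312.0655 — 2 statements merged into one kernel-verified Lean document; each statement's English description precedes it below -/
import Mathlib

section
/- For all ε > 0 and Δ > 0, V* = inf_{μ ∈ ⋃_{i≥1} 𝒫_{i,sym}} V(μ); that is, the infimum of the expected ℓ¹ cost over all probability measures satisfying the ε-differential-privacy constraint is attained in the limit over measures whose densities are constant on each ℓ¹ layer A_i(k). (Lemma 3.) -/
/-!
Let `ν` be a private noise distribution on a normed space of finite dimension `d`. Convolving `ν`
with the uniform law on a small ball gives a private law with a density `g`, and replacing `g` by
its means over thin shells `kδ ≤ ‖x‖ < (k + 1)δ` gives a law of the required shape; both steps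
preserve the total mass and change the expected norm by at most the radius of the ball and the
width of the shells.

Averaging over shells preserves privacy because shells with indices `j` and `k` can be matched,
uniform law to uniform law, by moving every point radially by at most `|j - k|δ`: parametrise each
shell by its direction and the fraction `s` of the volume of the shell lying below the point. The
radius is then a power mean of exponent `d` of the inner and outer radii, and by Minkowski's
inequality it moves by at most `c` when both radii do.
-/

open MeasureTheory Real Filter
open scoped ENNReal Topology

noncomputable section

/-- The ℓ¹ norm on ℝ². -/
def l1 (x : ℝ × ℝ) : ℝ := |x.1| + |x.2|

/-- The ε-differential-privacy constraint on a measure on ℝ² with sensitivity Δ. -/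
def DPC (ε Δ : ℝ) (μ : Measure (ℝ × ℝ)) : Prop :=
  ∀ S : Set (ℝ × ℝ), MeasurableSet S → ∀ t : ℝ × ℝ, l1 t ≤ Δ →
    μ S ≤ ENNReal.ofReal (Real.exp ε) * μ ((· + t) '' S)

/-- Expected ℓ¹ cost of a noise distribution. -/
def cost (μ : Measure (ℝ × ℝ)) : ℝ≥0∞ := ∫⁻ x, ENNReal.ofReal (l1 x) ∂μ

/-- The index k of the ℓ¹ layer A_i(k) = {x : kΔ/i ≤ ‖x‖₁ < (k+1)Δ/i} containing x. -/
def layerIdx (Δ : ℝ) (i : ℕ) (x : ℝ × ℝ) : ℕ := ⌊l1 x * i / Δ⌋₊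

/-- μ has a density w.r.t. Lebesgue measure which is constant on each ℓ¹ layer
A_i(k), with constant value a_k on A_i(k); (a_k) is the density sequence of μ. -/
def HasDensitySeq (Δ : ℝ) (i : ℕ) (μ : Measure (ℝ × ℝ)) (a : ℕ → ℝ≥0∞) : Prop :=
  μ = MeasureTheory.volume.withDensity (fun x => a (layerIdx Δ i x))

/-- Membership in 𝒫: probability measures satisfying the ε-DP constraint. -/
def MemP (ε Δ : ℝ) (μ : Measure (ℝ × ℝ)) : Prop :=
  IsProbabilityMeasure μ ∧ DPC ε Δ μ

/-- Membership in 𝒫_{i,sym}: members of 𝒫 with layer-constant density. -/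
def MemPsym (ε Δ : ℝ) (i : ℕ) (μ : Measure (ℝ × ℝ)) : Prop :=
  MemP ε Δ μ ∧ ∃ a : ℕ → ℝ≥0∞, HasDensitySeq Δ i μ a

/-- Membership in 𝒫_i^{(a)}: layer-constant density with nonincreasing density sequence. -/
def MemPa (ε Δ : ℝ) (i : ℕ) (μ : Measure (ℝ × ℝ)) : Prop :=
  MemP ε Δ μ ∧ ∃ a : ℕ → ℝ≥0∞, HasDensitySeq Δ i μ a ∧ Antitone a

/-- Membership in 𝒫_i^{(b)}: additionally the density sequence decays geometrically,
a_k = e^ε · a_{k+i} for all k. -/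
def MemPb (ε Δ : ℝ) (i : ℕ) (μ : Measure (ℝ × ℝ)) : Prop :=
  MemP ε Δ μ ∧ ∃ a : ℕ → ℝ≥0∞, HasDensitySeq Δ i μ a ∧ Antitone a ∧
    ∀ k : ℕ, a k = ENNReal.ofReal (Real.exp ε) * a (k + i)

/-- Membership in 𝒫_i^{(c)}: additionally a₀ = e^ε · a_{i−1} and
a₀ = a₁ = ⋯ = a_k for some 0 ≤ k ≤ i−2. -/
def MemPc (ε Δ : ℝ) (i : ℕ) (μ : Measure (ℝ × ℝ)) : Prop :=
  MemP ε Δ μ ∧ ∃ a : ℕ → ℝ≥0∞, HasDensitySeq Δ i μ a ∧ Antitone a ∧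
    (∀ k : ℕ, a k = ENNReal.ofReal (Real.exp ε) * a (k + i)) ∧
    a 0 = ENNReal.ofReal (Real.exp ε) * a (i - 1) ∧
    ∃ k : ℕ, k ≤ i - 2 ∧ ∀ j : ℕ, j ≤ k → a j = a 0

/-- Membership in 𝒫_i^{(d)}: members of 𝒫_i^{(c)} whose density sequence takes only
the two values a₀ and a_{i−1} on each period: for some 1 ≤ k ≤ i−2, a_j = a₀ for
0 ≤ j < k and a_j = a_{i−1} for k < j ≤ i−1. -/
def MemPd (ε Δ : ℝ) (i : ℕ) (μ : Measure (ℝ × ℝ)) : Prop :=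
  MemP ε Δ μ ∧ ∃ a : ℕ → ℝ≥0∞, HasDensitySeq Δ i μ a ∧ Antitone a ∧
    (∀ k : ℕ, a k = ENNReal.ofReal (Real.exp ε) * a (k + i)) ∧
    a 0 = ENNReal.ofReal (Real.exp ε) * a (i - 1) ∧
    (∃ k : ℕ, k ≤ i - 2 ∧ ∀ j : ℕ, j ≤ k → a j = a 0) ∧
    ∃ k : ℕ, 1 ≤ k ∧ k ≤ i - 2 ∧ (∀ j : ℕ, j < k → a j = a 0) ∧
      ∀ j : ℕ, k < j → j ≤ i - 1 → a j = a (i - 1)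

section PowerMean

/-- The weighted power mean `((1 - s) aᵈ + s bᵈ)^(1/d)`. In dimension `d`, the ball of this radius
contains the fraction `s` of the volume of the shell between the radii `a` and `b`. -/
def powerMean (d : ℕ) (a b s : ℝ) : ℝ := ((1 - s) * a ^ d + s * b ^ d) ^ (1 / d : ℝ)

variable {d : ℕ} {a b c a' b' s : ℝ}

lemma powerMean_mono (ha : 0 ≤ a) (hb : 0 ≤ b) (haa' : a ≤ a') (hbb' : b ≤ b')
    (hs : s ∈ Set.Icc (0 : ℝ) 1) : powerMean d a b s ≤ powerMean d a' b' s := by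
  have h₀ := hs.1
  have h₁ : 0 ≤ 1 - s := sub_nonneg.2 hs.2
  unfold powerMean
  gcongr

lemma powerMean_add_le (hd : d ≠ 0) (ha : 0 ≤ a) (hb : 0 ≤ b) (hc : 0 ≤ c)
    (hs : s ∈ Set.Icc (0 : ℝ) 1) :
    powerMean d (a + c) (b + c) s ≤ powerMean d a b s + c := by
  have h₀ := hs.1
  have h₁ : 0 ≤ 1 - s := sub_nonneg.2 hs.2
  have root_mul_pow {w x : ℝ} (hw : 0 ≤ w) (hx : 0 ≤ x) :
      (w ^ (1 / d : ℝ) * x) ^ (d : ℝ) = w * x ^ d := by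
    rw [mul_rpow (by positivity) hx, ← rpow_mul hw, one_div_mul_cancel (by positivity), rpow_one,
      rpow_natCast]
  have minkowski := Real.Lp_add_le_of_nonneg (p := d) (s := (Finset.univ : Finset (Fin 2)))
    (f := ![(1 - s) ^ (1 / d : ℝ) * a, s ^ (1 / d : ℝ) * b])
    (g := ![(1 - s) ^ (1 / d : ℝ) * c, s ^ (1 / d : ℝ) * c])
    (by exact_mod_cast Nat.one_le_iff_ne_zero.2 hd)
    (fun i _ => by fin_cases i <;> dsimp <;> positivity)
    (fun i _ => by fin_cases i <;> dsimp <;> positivity)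
  simp only [Fin.sum_univ_two, Matrix.cons_val_zero, Matrix.cons_val_one, ← mul_add,
    root_mul_pow h₁ ha, root_mul_pow h₀ hb, root_mul_pow h₁ hc, root_mul_pow h₀ hc,
    root_mul_pow h₁ (add_nonneg ha hc), root_mul_pow h₀ (add_nonneg hb hc)] at minkowski
  rwa [← add_mul, sub_add_cancel, one_mul, one_div, pow_rpow_inv_natCast hc hd,
    ← one_div] at minkowski

lemma abs_powerMean_sub_powerMean_le (hd : d ≠ 0) (ha : 0 ≤ a) (hb : 0 ≤ b) (ha' : 0 ≤ a')
    (hb' : 0 ≤ b') (haa' : |a - a'| ≤ c) (hbb' : |b - b'| ≤ c) (hs : s ∈ Set.Icc (0 : ℝ) 1) :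
    |powerMean d a b s - powerMean d a' b' s| ≤ c := by
  have hc : 0 ≤ c := (abs_nonneg _).trans haa'
  have le_add {u v u' v' : ℝ} (hu : 0 ≤ u) (hv : 0 ≤ v) (hu' : 0 ≤ u') (hv' : 0 ≤ v')
      (huu' : u ≤ u' + c) (hvv' : v ≤ v' + c) : powerMean d u v s ≤ powerMean d u' v' s + c :=
    (powerMean_mono hu hv huu' hvv' hs).trans (powerMean_add_le hd hu' hv' hc hs)
  rw [abs_le] at haa' hbb' ⊢
  constructor
  · linarith [le_add ha' hb' ha hb (by linarith) (by linarith)]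
  · linarith [le_add ha hb ha' hb' (by linarith) (by linarith)]

lemma continuous_powerMean (d : ℕ) (a b : ℝ) : Continuous (powerMean d a b) := by
  unfold powerMean
  exact Continuous.rpow_const (by fun_prop) fun _ => .inr (by positivity)

lemma setLIntegral_comp_powerMean (hd : d ≠ 0) (ha : 0 ≤ a) (hab : a < b) (G : ℝ → ℝ≥0∞) :
    ∫⁻ s in Set.Ioo 0 1, G (powerMean d a b s) =
      ENNReal.ofReal (d / (b ^ d - a ^ d)) *
        ∫⁻ r in Set.Ioo a b, ENNReal.ofReal (r ^ (d - 1)) * G r := by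
  let φ : ℝ → ℝ := fun r => (r ^ d - a ^ d) / (b ^ d - a ^ d)
  have hpos : 0 < b ^ d - a ^ d := sub_pos.2 (pow_lt_pow_left₀ hab ha hd)
  have φ_strictMono : StrictMonoOn φ (Set.Icc a b) := by
    intro r hr r' _ hrr'
    have : r ^ d < r' ^ d := pow_lt_pow_left₀ hrr' (ha.trans hr.1) hd
    simp only [φ]
    gcongr
  have φ_image : φ '' Set.Ioo a b = Set.Ioo 0 1 := by
    have φ_left : φ a = 0 := by simp [φ]
    have φ_right : φ b = 1 := div_self hpos.ne'
    rw [← φ_left, ← φ_right]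
    exact φ_strictMono.image_Ioo_subset.antisymm
      (intermediate_value_Ioo hab.le (by fun_prop))
  have φ_deriv (r : ℝ) : HasDerivAt φ (d / (b ^ d - a ^ d) * r ^ (d - 1)) r := by
    convert! ((hasDerivAt_pow d r).sub_const (a ^ d)).div_const (b ^ d - a ^ d) using 1
    ring
  have powerMean_φ {r : ℝ} (hr : 0 ≤ r) : powerMean d a b (φ r) = r := by
    have : (1 - φ r) * a ^ d + φ r * b ^ d = r ^ d := by
      simp only [φ]
      field_simp
      ring
    rw [powerMean, this, one_div, pow_rpow_inv_natCast hr hd]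
  rw [← φ_image, lintegral_image_eq_lintegral_deriv_mul_of_monotoneOn measurableSet_Ioo
      (fun r _ => (φ_deriv r).hasDerivWithinAt)
      (φ_strictMono.monotoneOn.mono Set.Ioo_subset_Icc_self),
    ← lintegral_const_mul' _ _ ENNReal.ofReal_ne_top]
  refine setLIntegral_congr_fun measurableSet_Ioo fun r hr => ?_
  have hr₀ : 0 ≤ r := ha.trans hr.1.le
  simp only [powerMean_φ hr₀, ← mul_assoc]
  rw [ENNReal.ofReal_mul (by positivity)]

end PowerMean

section Polar

/-- The half-open annulus `a ≤ ‖x‖ < b` centred at the origin. -/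
def annulus (E : Type*) [Norm E] (a b : ℝ) : Set E := norm ⁻¹' Set.Ico a b

variable {E : Type*} [NormedAddCommGroup E] [MeasurableSpace E] [BorelSpace E]

lemma measurableSet_annulus (a b : ℝ) : MeasurableSet (annulus E a b) :=
  measurable_norm measurableSet_Ico

variable [NormedSpace ℝ E] {f : E → ℝ≥0∞}

lemma measurable_lintegral_sphere_smul [SecondCountableTopology E]
    (σ : Measure (Metric.sphere (0 : E) 1)) [SFinite σ] (hf : Measurable f) :
    Measurable fun r : ℝ => ∫⁻ ω, f (r • (ω : E)) ∂σ := by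
  refine Measurable.lintegral_prod_left'
    (f := fun p : Metric.sphere (0 : E) 1 × ℝ => f (p.2 • (p.1 : E))) (hf.comp ?_)
  fun_prop

variable [FiniteDimensional ℝ E] [Nontrivial E] (μ : Measure E) [μ.IsAddHaarMeasure]

local notation "dim" => Module.finrank ℝ E

lemma lintegral_eq_lintegral_Ioi_toSphere (hf : Measurable f) :
    ∫⁻ x, f x ∂μ = ∫⁻ r in Set.Ioi (0 : ℝ), ENNReal.ofReal (r ^ (dim - 1)) *
      ∫⁻ ω, f (r • (ω : E)) ∂μ.toSphere := by
  let F : Metric.sphere (0 : E) 1 × Set.Ioi (0 : ℝ) → ℝ≥0∞ := fun p => f (p.2.1 • (p.1 : E))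
  have hF : Measurable F := hf.comp (by fun_prop)
  have F_polar (x : ({0}ᶜ : Set E)) : F (homeomorphUnitSphereProd E x) = f x := by
    have hx : ‖(x : E)‖ ≠ 0 := norm_ne_zero_iff.2 x.2
    simp [F, smul_smul, hx]
  calc ∫⁻ x, f x ∂μ
    _ = ∫⁻ x : ({0}ᶜ : Set E), F (homeomorphUnitSphereProd E x) ∂μ.comap Subtype.val := by
        simp only [F_polar]
        rw [lintegral_subtype_comap (measurableSet_singleton 0).compl, restrict_compl_singleton]
    _ = ∫⁻ p, F p ∂μ.toSphere.prod (.volumeIoiPow (dim - 1)) :=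
        μ.measurePreserving_homeomorphUnitSphereProd.lintegral_comp_emb
          (Homeomorph.measurableEmbedding _) F
    _ = ∫⁻ r : Set.Ioi (0 : ℝ), ENNReal.ofReal (r.1 ^ (dim - 1)) *
          ∫⁻ ω, f (r.1 • (ω : E)) ∂μ.toSphere ∂Measure.comap Subtype.val volume := by
        rw [lintegral_prod_symm' _ hF]
        exact lintegral_withDensity_eq_lintegral_mul _ (by fun_prop)
          ((measurable_lintegral_sphere_smul μ.toSphere hf).comp measurable_subtype_coe)
    _ = _ := lintegral_subtype_comap measurableSet_Ioi
          fun r : ℝ => ENNReal.ofReal (r ^ (dim - 1)) * ∫⁻ ω, f (r • (ω : E)) ∂μ.toSphere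

variable {a b : ℝ}

lemma setLIntegral_annulus (hf : Measurable f) (ha : 0 ≤ a) :
    ∫⁻ x in annulus E a b, f x ∂μ = ∫⁻ r in Set.Ioo a b, ENNReal.ofReal (r ^ (dim - 1)) *
      ∫⁻ ω, f (r • (ω : E)) ∂μ.toSphere := by
  have smul_mem {r : ℝ} (hr : 0 < r) (ω : Metric.sphere (0 : E) 1) :
      r • (ω : E) ∈ annulus E a b ↔ r ∈ Set.Ico a b := by
    simp [annulus, norm_smul, abs_of_pos hr]
  have inter_ae : (Set.Ico a b ∩ Set.Ioi 0 : Set ℝ) =ᵐ[volume] Set.Ioo a b := by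
    have : (Set.Ioo a b ∩ Set.Ioi 0 : Set ℝ) = Set.Ioo a b :=
      Set.inter_eq_left.2 fun r hr => ha.trans_lt hr.1
    rw [← this]
    exact Ioo_ae_eq_Ico.symm.inter (ae_eq_refl _)
  rw [← lintegral_indicator (measurableSet_annulus a b),
    lintegral_eq_lintegral_Ioi_toSphere μ (hf.indicator (measurableSet_annulus a b)),
    ← setLIntegral_congr inter_ae, ← setLIntegral_indicator measurableSet_Ico]
  refine setLIntegral_congr_fun measurableSet_Ioi fun r hr => ?_
  by_cases hrab : r ∈ Set.Ico a b <;> simp [Set.indicator, smul_mem hr, hrab]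

lemma setLAverage_annulus (hf : Measurable f) (ha : 0 ≤ a) (hab : a < b) :
    ⨍⁻ x in annulus E a b, f x ∂μ =
      ∫⁻ s in Set.Ioo 0 1, ⨍⁻ ω, f (powerMean dim a b s • (ω : E)) ∂μ.toSphere := by
  have hdim : dim ≠ 0 := Module.finrank_pos.ne'
  set K : ℝ≥0∞ := ENNReal.ofReal (dim / (b ^ dim - a ^ dim))
  have hK₀ : K ≠ 0 := by
    have : 0 < b ^ dim - a ^ dim := sub_pos.2 (pow_lt_pow_left₀ hab ha hdim)
    exact (ENNReal.ofReal_pos.2 (by positivity)).ne'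
  have mul_setLIntegral {h : E → ℝ≥0∞} (hh : Measurable h) :
      K * ∫⁻ x in annulus E a b, h x ∂μ =
        ∫⁻ s in Set.Ioo 0 1, ∫⁻ ω, h (powerMean dim a b s • (ω : E)) ∂μ.toSphere := by
    rw [setLIntegral_annulus μ hh ha, ← setLIntegral_comp_powerMean hdim ha hab]
  have mul_measure : K * μ (annulus E a b) = μ.toSphere Set.univ := by
    simpa using mul_setLIntegral measurable_one
  rw [setLAverage_eq]
  simp only [laverage_eq, div_eq_mul_inv]
  rw [lintegral_mul_const' _ _ (ENNReal.inv_ne_top.2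
      (Measure.measure_univ_ne_zero.2 μ.toSphere_ne_zero)), ← mul_setLIntegral hf, ← mul_measure,
    ← div_eq_mul_inv, ← div_eq_mul_inv, ENNReal.mul_div_mul_left _ _ hK₀ ENNReal.ofReal_ne_top]

end Polar

section DifferentialPrivacy

variable {E : Type*} [NormedAddCommGroup E] [MeasurableSpace E] [BorelSpace E]
  {C : ℝ≥0∞} {Δ : ℝ}

/-- Differential privacy of an additive noise distribution `ν` with sensitivity `Δ`; the constant
`C` plays the role of `e^ε`. -/
def IsDP (C : ℝ≥0∞) (Δ : ℝ) (ν : Measure E) : Prop :=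
  ∀ S, MeasurableSet S → ∀ t, ‖t‖ ≤ Δ → ν S ≤ C * ν ((· + t) '' S)

/-- The pointwise form of differential privacy, for a density of the noise distribution with
respect to a translation-invariant measure. -/
def IsDPDensity (C : ℝ≥0∞) (Δ : ℝ) (g : E → ℝ≥0∞) : Prop :=
  ∀ x t, ‖t‖ ≤ Δ → g x ≤ C * g (x + t)

lemma IsDPDensity.isDP_withDensity {g : E → ℝ≥0∞} (hg : Measurable g) (h : IsDPDensity C Δ g)
    (μ : Measure E) [μ.IsAddRightInvariant] : IsDP C Δ (μ.withDensity g) := by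
  intro S hS t ht
  have hS' : MeasurableSet ((· + t) '' S) :=
    (measurableEmbedding_addRight t).measurableSet_image' hS
  rw [withDensity_apply _ hS, withDensity_apply _ hS']
  calc ∫⁻ x in S, g x ∂μ ≤ ∫⁻ x in S, C * g (x + t) ∂μ := lintegral_mono fun x => h x t ht
    _ = C * ∫⁻ x in S, g (x + t) ∂μ := lintegral_const_mul C (hg.comp (by fun_prop))
    _ = C * ∫⁻ y in (· + t) '' S, g y ∂μ := by
        rw [(measurePreserving_add_right μ t).setLIntegral_comp_emb
          (measurableEmbedding_addRight t)]

variable [NormedSpace ℝ E] [FiniteDimensional ℝ E] [Nontrivial E]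

lemma IsDPDensity.setLAverage_annulus_le {g : E → ℝ≥0∞} (hg : Measurable g)
    (h : IsDPDensity C Δ g) (μ : Measure E) [μ.IsAddHaarMeasure] {a b a' b' : ℝ}
    (ha : 0 ≤ a) (hab : a < b) (ha' : 0 ≤ a') (hab' : a' < b')
    (haa' : |a - a'| ≤ Δ) (hbb' : |b - b'| ≤ Δ) :
    ⨍⁻ x in annulus E a b, g x ∂μ ≤ C * ⨍⁻ x in annulus E a' b', g x ∂μ := by
  let m : ℝ → ℝ := powerMean (Module.finrank ℝ E) a b
  let m' : ℝ → ℝ := powerMean (Module.finrank ℝ E) a' b'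
  let σ : Measure (Metric.sphere (0 : E) 1) := (μ.toSphere Set.univ)⁻¹ • μ.toSphere
  have hm' : Measurable m' := (continuous_powerMean _ a' b').measurable
  have transport {s : ℝ} (hs : s ∈ Set.Ioo (0 : ℝ) 1) (ω : Metric.sphere (0 : E) 1) :
      g (m s • (ω : E)) ≤ C * g (m' s • (ω : E)) := by
    have norm_le : ‖(m' s - m s) • (ω : E)‖ ≤ Δ := by
      rw [norm_smul, norm_eq_of_mem_sphere, mul_one, Real.norm_eq_abs, abs_sub_comm]
      exact abs_powerMean_sub_powerMean_le Module.finrank_pos.ne' ha (ha.trans hab.le) ha'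
        (ha'.trans hab'.le) haa' hbb' (Set.Ioo_subset_Icc_self hs)
    simpa only [← add_smul, add_sub_cancel] using h (m s • (ω : E)) _ norm_le
  simp only [setLAverage_annulus μ hg ha hab, setLAverage_annulus μ hg ha' hab', laverage_eq']
  calc ∫⁻ s in Set.Ioo 0 1, ∫⁻ ω, g (m s • (ω : E)) ∂σ
    _ ≤ ∫⁻ s in Set.Ioo 0 1, ∫⁻ ω, C * g (m' s • (ω : E)) ∂σ :=
        setLIntegral_mono' measurableSet_Ioo fun s hs => lintegral_mono (transport hs)
    _ = ∫⁻ s in Set.Ioo 0 1, C * ∫⁻ ω, g (m' s • (ω : E)) ∂σ := by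
        congr! 2 with s
        exact lintegral_const_mul C (hg.comp (by fun_prop))
    _ = C * ∫⁻ s in Set.Ioo 0 1, ∫⁻ ω, g (m' s • (ω : E)) ∂σ :=
        lintegral_const_mul C ((measurable_lintegral_sphere_smul σ hg).comp hm')

end DifferentialPrivacy

section BallSmoothing

variable {E : Type*} [NormedAddCommGroup E] [MeasurableSpace E] [BorelSpace E]

/-- The density, with respect to a Haar measure `μ`, of the law of `Y + U`, where `Y` has law `ν`
and `U` is independent of `Y` and uniform on the ball of radius `η`. -/
def ballSmoothing (μ : Measure E) (η : ℝ) (ν : Measure E) (x : E) : ℝ≥0∞ :=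
  (μ (Metric.closedBall 0 η))⁻¹ * ν (Metric.closedBall x η)

lemma IsDP.isDPDensity_ballSmoothing {C : ℝ≥0∞} {Δ : ℝ} {ν : Measure E} (h : IsDP C Δ ν)
    (μ : Measure E) (η : ℝ) : IsDPDensity C Δ (ballSmoothing μ η ν) := by
  intro x t ht
  have image_closedBall : (· + t) '' Metric.closedBall x η = Metric.closedBall (x + t) η := by
    simp
  have := h (Metric.closedBall x η) measurableSet_closedBall t ht
  rw [image_closedBall] at this
  rw [ballSmoothing, ballSmoothing, mul_left_comm]
  gcongr

variable [SecondCountableTopology E]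

lemma measurable_measure_closedBall (ν : Measure E) [SFinite ν] (r : ℝ) :
    Measurable fun x => ν (Metric.closedBall x r) :=
  measurable_measure_prodMk_left (s := {p : E × E | dist p.2 p.1 ≤ r})
    (measurableSet_le (by fun_prop) measurable_const)

lemma lintegral_mul_measure_closedBall {w : E → ℝ≥0∞} (hw : Measurable w) (μ ν : Measure E)
    [SFinite μ] [SFinite ν] (r : ℝ) :
    ∫⁻ x, w x * ν (Metric.closedBall x r) ∂μ =
      ∫⁻ y, ∫⁻ x in Metric.closedBall y r, w x ∂μ ∂ν := by
  let D : Set (E × E) := {p | dist p.2 p.1 ≤ r}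
  have hD : MeasurableSet D := measurableSet_le (by fun_prop) measurable_const
  calc ∫⁻ x, w x * ν (Metric.closedBall x r) ∂μ
    _ = ∫⁻ x, ∫⁻ y, D.indicator (fun p => w p.1) (x, y) ∂ν ∂μ := by
        congr! 2 with x
        rw [← setLIntegral_const, ← lintegral_indicator measurableSet_closedBall]
        rfl
    _ = ∫⁻ y, ∫⁻ x, D.indicator (fun p => w p.1) (x, y) ∂μ ∂ν :=
        lintegral_lintegral_swap ((hw.comp measurable_fst).indicator hD).aemeasurable
    _ = ∫⁻ y, ∫⁻ x in Metric.closedBall y r, w x ∂μ ∂ν := by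
        congr! 2 with y
        rw [← lintegral_indicator measurableSet_closedBall]
        congr! 2 with x
        simp only [D, Set.indicator, Set.mem_ofPred_eq, Metric.mem_closedBall, dist_comm]

lemma measurable_ballSmoothing (μ ν : Measure E) [SFinite ν] (η : ℝ) :
    Measurable (ballSmoothing μ η ν) :=
  (measurable_measure_closedBall ν η).const_mul _

lemma setLAverage_le_of_forall_mem_le {α : Type*} [MeasurableSpace α] (μ : Measure α) {s : Set α}
    (hs : MeasurableSet s) {f : α → ℝ≥0∞} {c : ℝ≥0∞} (h : ∀ x ∈ s, f x ≤ c) :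
    ⨍⁻ x in s, f x ∂μ ≤ c := by
  rw [setLAverage_eq]
  refine ENNReal.div_le_of_le_mul ?_
  rw [← setLIntegral_const]
  exact setLIntegral_mono' hs h

variable [NormedSpace ℝ E] [FiniteDimensional ℝ E] (μ : Measure E) [μ.IsAddHaarMeasure]
  (ν : Measure E) [SFinite ν] {η : ℝ}

lemma lintegral_mul_ballSmoothing (hη : 0 < η) {w : E → ℝ≥0∞} (hw : Measurable w) :
    ∫⁻ x, w x * ballSmoothing μ η ν x ∂μ =
      ∫⁻ y, ⨍⁻ x in Metric.closedBall y η, w x ∂μ ∂ν := by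
  have inv_ne_top : (μ (Metric.closedBall 0 η))⁻¹ ≠ ∞ :=
    ENNReal.inv_ne_top.2 (Metric.measure_closedBall_pos μ 0 hη).ne'
  simp only [ballSmoothing, setLAverage_eq, μ.addHaar_closedBall_center, mul_left_comm (w _),
    div_eq_mul_inv]
  rw [lintegral_const_mul' _ _ inv_ne_top, lintegral_mul_const' _ _ inv_ne_top,
    lintegral_mul_measure_closedBall hw, mul_comm]

lemma lintegral_ballSmoothing (hη : 0 < η) :
    ∫⁻ x, ballSmoothing μ η ν x ∂μ = ν Set.univ := by
  have average_one (y : E) : ⨍⁻ _ in Metric.closedBall y η, (1 : ℝ≥0∞) ∂μ = 1 :=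
    setLAverage_one (Metric.measure_closedBall_pos μ y hη).ne' measure_closedBall_lt_top.ne
  simpa [average_one] using lintegral_mul_ballSmoothing μ ν hη measurable_one

lemma lintegral_enorm_mul_ballSmoothing_le (hη : 0 < η) :
    ∫⁻ x, ‖x‖ₑ * ballSmoothing μ η ν x ∂μ ≤
      ∫⁻ y, ‖y‖ₑ ∂ν + ENNReal.ofReal η * ν Set.univ := by
  have average_le (y : E) :
      ⨍⁻ x in Metric.closedBall y η, ‖x‖ₑ ∂μ ≤ ‖y‖ₑ + ENNReal.ofReal η := by
    refine setLAverage_le_of_forall_mem_le μ measurableSet_closedBall fun x hx => ?_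
    rw [← ofReal_norm, ← ofReal_norm, ← ENNReal.ofReal_add (norm_nonneg y) hη.le]
    exact ENNReal.ofReal_le_ofReal (norm_le_of_mem_closedBall hx)
  rw [lintegral_mul_ballSmoothing μ ν hη measurable_enorm, ← lintegral_const,
    ← lintegral_add_right _ measurable_const]
  exact lintegral_mono average_le

end BallSmoothing

section FiberMean

variable {α ι : Type*} [MeasurableSpace α]

/-- The mean of `g` over the fiber of `idx` above `k`. For countable `ι`, the function
`fiberMean μ idx g ∘ idx` is the conditional expectation of `g` given `idx`. -/
def fiberMean (μ : Measure α) (idx : α → ι) (g : α → ℝ≥0∞) (k : ι) : ℝ≥0∞ :=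
  ⨍⁻ x in idx ⁻¹' {k}, g x ∂μ

variable [MeasurableSpace ι] [MeasurableSingletonClass ι] {idx : α → ι}

lemma lintegral_eq_tsum_fiber [Countable ι] (hidx : Measurable idx) (μ : Measure α)
    (f : α → ℝ≥0∞) : ∫⁻ x, f x ∂μ = ∑' k, ∫⁻ x in idx ⁻¹' {k}, f x ∂μ := by
  rw [← lintegral_iUnion (fun k => hidx (measurableSet_singleton k)) (pairwise_disjoint_fiber idx),
    ← Set.preimage_iUnion, Set.iUnion_of_singleton, Set.preimage_univ, setLIntegral_univ]

lemma lintegral_mul_fiberMean [Countable ι] (hidx : Measurable idx) {μ : Measure α}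
    (hfin : ∀ k, μ (idx ⁻¹' {k}) ≠ ∞) {g : α → ℝ≥0∞} (hg : Measurable g) (φ : ι → ℝ≥0∞) :
    ∫⁻ x, φ (idx x) * fiberMean μ idx g (idx x) ∂μ = ∫⁻ x, φ (idx x) * g x ∂μ := by
  have hmeas (k : ι) : MeasurableSet (idx ⁻¹' {k}) := hidx (measurableSet_singleton k)
  rw [lintegral_eq_tsum_fiber hidx, lintegral_eq_tsum_fiber hidx μ]
  congr! 2 with k
  calc ∫⁻ x in idx ⁻¹' {k}, φ (idx x) * fiberMean μ idx g (idx x) ∂μ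
    _ = ∫⁻ _ in idx ⁻¹' {k}, φ k * fiberMean μ idx g k ∂μ :=
        setLIntegral_congr_fun (hmeas k) fun x (hx : idx x = k) => by simp only [hx]
    _ = φ k * ∫⁻ x in idx ⁻¹' {k}, g x ∂μ := by
        rw [setLIntegral_const, mul_assoc, mul_comm (fiberMean μ idx g k), fiberMean,
          measure_mul_setLAverage _ (hfin k)]
    _ = ∫⁻ x in idx ⁻¹' {k}, φ k * g x ∂μ := (lintegral_const_mul _ hg).symm
    _ = ∫⁻ x in idx ⁻¹' {k}, φ (idx x) * g x ∂μ :=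
        setLIntegral_congr_fun (hmeas k) fun x (hx : idx x = k) => by simp only [hx]

end FiberMean

section Shells

variable {E : Type*} [NormedAddCommGroup E] {C : ℝ≥0∞} {δ : ℝ}

/-- The index of the shell `kδ ≤ ‖x‖ < (k + 1)δ` containing `x`. -/
def shellIdx (δ : ℝ) (x : E) : ℕ := ⌊‖x‖ / δ⌋₊

lemma preimage_shellIdx_singleton (hδ : 0 < δ) (k : ℕ) :
    shellIdx δ ⁻¹' {k} = annulus E (k * δ) ((k + 1) * δ) := by
  ext x
  simp only [shellIdx, annulus, Set.mem_preimage, Set.mem_singleton_iff, Set.mem_Ico]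
  rw [Nat.floor_eq_iff (by positivity), le_div_iff₀ hδ, div_lt_iff₀ hδ]

lemma shellIdx_add_le (hδ : 0 < δ) {i : ℕ} {t : E} (ht : ‖t‖ ≤ i * δ) (x : E) :
    shellIdx δ (x + t) ≤ shellIdx δ x + i := by
  rw [shellIdx, shellIdx, ← Nat.floor_add_natCast (by positivity), div_add' _ _ _ hδ.ne']
  gcongr
  exact (norm_add_le x t).trans (by gcongr)

lemma enorm_le_shellIdx_add_one_mul (hδ : 0 < δ) (x : E) :
    ‖x‖ₑ ≤ ENNReal.ofReal ((shellIdx δ x + 1) * δ) := by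
  rw [← ofReal_norm]
  exact ENNReal.ofReal_le_ofReal ((div_le_iff₀ hδ).1 (Nat.lt_floor_add_one _).le)

lemma shellIdx_add_one_mul_le_enorm_add (hδ : 0 < δ) (x : E) :
    ENNReal.ofReal ((shellIdx δ x + 1) * δ) ≤ ‖x‖ₑ + ENNReal.ofReal δ := by
  rw [← ofReal_norm, ← ENNReal.ofReal_add (norm_nonneg x) hδ.le, add_one_mul]
  gcongr
  exact (le_div_iff₀ hδ).1 (Nat.floor_le (by positivity))

variable [MeasurableSpace E]

lemma measure_preimage_shellIdx_singleton_ne_top [ProperSpace E] (hδ : 0 < δ) (μ : Measure E)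
    [IsFiniteMeasureOnCompacts μ] (k : ℕ) : μ (shellIdx δ ⁻¹' {k}) ≠ ∞ := by
  have : annulus E (k * δ) ((k + 1) * δ) ⊆ Metric.closedBall 0 ((k + 1) * δ) := fun x hx =>
    mem_closedBall_zero_iff.2 hx.2.le
  rw [preimage_shellIdx_singleton hδ]
  exact measure_ne_top_of_subset this measure_closedBall_lt_top.ne

variable [BorelSpace E]

lemma measurable_shellIdx (δ : ℝ) : Measurable (shellIdx δ : E → ℕ) :=
  Nat.measurable_floor.comp (measurable_norm.div_const δ)

lemma lintegral_fiberMean_shellIdx [ProperSpace E] (hδ : 0 < δ) (μ : Measure E)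
    [IsFiniteMeasureOnCompacts μ] {g : E → ℝ≥0∞} (hg : Measurable g) :
    ∫⁻ x, fiberMean μ (shellIdx δ) g (shellIdx δ x) ∂μ = ∫⁻ x, g x ∂μ := by
  simpa only [one_mul] using lintegral_mul_fiberMean (measurable_shellIdx δ)
    (measure_preimage_shellIdx_singleton_ne_top hδ μ) hg fun _ => 1

lemma lintegral_enorm_mul_fiberMean_shellIdx_le [ProperSpace E] (hδ : 0 < δ) (μ : Measure E)
    [IsFiniteMeasureOnCompacts μ] {g : E → ℝ≥0∞} (hg : Measurable g) :
    ∫⁻ x, ‖x‖ₑ * fiberMean μ (shellIdx δ) g (shellIdx δ x) ∂μ ≤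
      ∫⁻ x, ‖x‖ₑ * g x ∂μ + ENNReal.ofReal δ * ∫⁻ x, g x ∂μ := by
  let R : ℕ → ℝ≥0∞ := fun k => ENNReal.ofReal ((k + 1) * δ)
  calc ∫⁻ x, ‖x‖ₑ * fiberMean μ (shellIdx δ) g (shellIdx δ x) ∂μ
    _ ≤ ∫⁻ x, R (shellIdx δ x) * fiberMean μ (shellIdx δ) g (shellIdx δ x) ∂μ := by
        gcongr with x
        exact enorm_le_shellIdx_add_one_mul hδ x
    _ = ∫⁻ x, R (shellIdx δ x) * g x ∂μ :=
        lintegral_mul_fiberMean (measurable_shellIdx δ)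
          (measure_preimage_shellIdx_singleton_ne_top hδ μ) hg R
    _ ≤ ∫⁻ x, (‖x‖ₑ + ENNReal.ofReal δ) * g x ∂μ := by
        gcongr with x
        exact shellIdx_add_one_mul_le_enorm_add hδ x
    _ = ∫⁻ x, ‖x‖ₑ * g x ∂μ + ENNReal.ofReal δ * ∫⁻ x, g x ∂μ := by
        simp only [add_mul]
        rw [lintegral_add_right _ (hg.const_mul _), lintegral_const_mul _ hg]

lemma IsDPDensity.fiberMean_shellIdx [NormedSpace ℝ E] [FiniteDimensional ℝ E] [Nontrivial E]
    (hδ : 0 < δ) {i : ℕ} {g : E → ℝ≥0∞} (hg : Measurable g) (h : IsDPDensity C (i * δ) g)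
    (μ : Measure E) [μ.IsAddHaarMeasure] :
    IsDPDensity C (i * δ) fun x : E => fiberMean μ (shellIdx δ) g (shellIdx δ x) := by
  intro x t ht
  set j := shellIdx δ x
  set k := shellIdx δ (x + t)
  have hkj : (k : ℝ) ≤ j + i := by exact_mod_cast shellIdx_add_le hδ ht x
  have hjk : (j : ℝ) ≤ k + i := by
    have := shellIdx_add_le hδ (by rwa [norm_neg]) (x + t) (t := -t)
    rw [add_neg_cancel_right] at this
    exact_mod_cast this
  have radius_sub_le {u v : ℝ} (huv : u - v = j - k) : |u * δ - v * δ| ≤ i * δ := by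
    rw [← sub_mul, huv, abs_mul, abs_of_pos hδ]
    gcongr
    exact abs_le.2 ⟨by linarith, by linarith⟩
  simp only [fiberMean, preimage_shellIdx_singleton hδ]
  exact h.setLAverage_annulus_le hg μ (by positivity) (by gcongr; linarith) (by positivity)
    (by gcongr; linarith) (radius_sub_le rfl) (radius_sub_le (by ring))

end Shells

section Approximation

variable {E : Type*} [NormedAddCommGroup E] [MeasurableSpace E] [BorelSpace E] [NormedSpace ℝ E]
  [FiniteDimensional ℝ E] [Nontrivial E] {C : ℝ≥0∞} {Δ : ℝ}

/-- The probability measures satisfying the differential privacy constraint, as a class of noise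
distributions over which the expected norm is minimised. -/
def IsDPProbability (C : ℝ≥0∞) (Δ : ℝ) (ν : Measure E) : Prop :=
  IsProbabilityMeasure ν ∧ IsDP C Δ ν

lemma exists_shellDensity_lintegral_enorm_le (μ : Measure E) [μ.IsAddHaarMeasure] {δ : ℝ}
    (hδ : 0 < δ) {i : ℕ} {ν : Measure E} (hν : IsDPProbability C (i * δ) ν) :
    ∃ a : ℕ → ℝ≥0∞, IsDPProbability C (i * δ) (μ.withDensity fun x => a (shellIdx δ x)) ∧
      ∫⁻ x, ‖x‖ₑ ∂(μ.withDensity fun x => a (shellIdx δ x)) ≤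
        ∫⁻ x, ‖x‖ₑ ∂ν + 2 * ENNReal.ofReal δ := by
  obtain ⟨_, hdp⟩ := hν
  let g : E → ℝ≥0∞ := ballSmoothing μ δ ν
  have hg : Measurable g := measurable_ballSmoothing μ ν δ
  have lintegral_g : ∫⁻ x, g x ∂μ = 1 := by rw [lintegral_ballSmoothing μ ν hδ, measure_univ]
  let a : ℕ → ℝ≥0∞ := fiberMean μ (shellIdx δ) g
  have ha : Measurable fun x : E => a (shellIdx δ x) :=
    (measurable_of_countable a).comp (measurable_shellIdx δ)
  refine ⟨a, ⟨⟨?_⟩, ?_⟩, ?_⟩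
  · rw [withDensity_apply _ .univ, setLIntegral_univ, lintegral_fiberMean_shellIdx hδ μ hg,
      lintegral_g]
  · exact ((hdp.isDPDensity_ballSmoothing μ δ).fiberMean_shellIdx hδ hg μ).isDP_withDensity ha μ
  · rw [lintegral_withDensity_eq_lintegral_mul _ ha measurable_enorm]
    calc ∫⁻ x, a (shellIdx δ x) * ‖x‖ₑ ∂μ
      _ = ∫⁻ x, ‖x‖ₑ * a (shellIdx δ x) ∂μ := by simp only [mul_comm]
      _ ≤ ∫⁻ x, ‖x‖ₑ * g x ∂μ + ENNReal.ofReal δ * ∫⁻ x, g x ∂μ :=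
          lintegral_enorm_mul_fiberMean_shellIdx_le hδ μ hg
      _ ≤ ∫⁻ x, ‖x‖ₑ ∂ν + ENNReal.ofReal δ * ν Set.univ + ENNReal.ofReal δ * ∫⁻ x, g x ∂μ := by
          gcongr
          exact lintegral_enorm_mul_ballSmoothing_le μ ν hδ
      _ = ∫⁻ x, ‖x‖ₑ ∂ν + 2 * ENNReal.ofReal δ := by
          rw [lintegral_g, measure_univ, mul_one, add_assoc, two_mul]

theorem Vstar_eq_inf_Psym_general (μ : Measure E) [μ.IsAddHaarMeasure] (C : ℝ≥0∞) (hΔ : 0 < Δ) :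
    (⨅ (ν : Measure E) (_ : IsDPProbability C Δ ν), ∫⁻ x, ‖x‖ₑ ∂ν) =
      ⨅ (ν : Measure E) (_ : ∃ i : ℕ, 1 ≤ i ∧ IsDPProbability C Δ ν ∧
        ∃ a : ℕ → ℝ≥0∞, ν = μ.withDensity fun x => a (shellIdx (Δ / i) x)),
        ∫⁻ x, ‖x‖ₑ ∂ν := by
  refine le_antisymm (le_iInf₂ fun ν ⟨_, _, hν, _⟩ => iInf₂_le ν hν) (le_iInf₂ fun ν hν => ?_)
  have tendsto_bound : Tendsto (fun i : ℕ => ∫⁻ x, ‖x‖ₑ ∂ν + 2 * ENNReal.ofReal (Δ / i)) atTop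
      (𝓝 (∫⁻ x, ‖x‖ₑ ∂ν)) := by
    have := ENNReal.tendsto_ofReal (tendsto_const_div_atTop_nhds_zero_nat Δ)
    rw [ENNReal.ofReal_zero] at this
    simpa using (ENNReal.Tendsto.const_mul this (.inr ENNReal.ofNat_ne_top)).const_add _
  refine ge_of_tendsto tendsto_bound (eventually_atTop.2 ⟨1, fun i hi => ?_⟩)
  have hi₀ : (0 : ℝ) < i := by exact_mod_cast hi
  have mul_shellWidth : i * (Δ / i) = Δ := mul_div_cancel₀ Δ hi₀.ne'
  rw [← mul_shellWidth] at hν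
  obtain ⟨a, ha, cost_le⟩ := exists_shellDensity_lintegral_enorm_le μ (div_pos hΔ hi₀) hν
  rw [mul_shellWidth] at ha
  exact (iInf₂_le _ ⟨i, hi, ha, a, rfl⟩).trans cost_le

end Approximation

section Plane

/-- The identification of `ℝ × ℝ`, whose own norm is the maximum norm, with the plane normed
by `l1`. -/
def toL1Plane : ℝ × ℝ ≃ᵐ WithLp 1 (ℝ × ℝ) := MeasurableEquiv.toLp 1 (ℝ × ℝ)

instance : (volume.map toL1Plane).IsAddHaarMeasure :=
  (WithLp.prodContinuousLinearEquiv 1 ℝ ℝ ℝ).symm.isAddHaarMeasure_map volume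

lemma norm_toL1Plane (x : ℝ × ℝ) : ‖toL1Plane x‖ = l1 x :=
  WithLp.prod_norm_eq_of_L1 _

lemma shellIdx_toL1Plane (Δ : ℝ) (i : ℕ) (x : ℝ × ℝ) :
    shellIdx (Δ / i) (toL1Plane x) = layerIdx Δ i x := by
  rw [shellIdx, norm_toL1Plane, layerIdx, div_div_eq_mul_div]

variable {ε Δ : ℝ} {μ : Measure (ℝ × ℝ)}

lemma lintegral_enorm_map_toL1Plane (μ : Measure (ℝ × ℝ)) :
    ∫⁻ y, ‖y‖ₑ ∂μ.map toL1Plane = cost μ := by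
  rw [lintegral_map_equiv, cost]
  simp only [← ofReal_norm, norm_toL1Plane]

lemma isDP_map_toL1Plane_iff :
    IsDP (ENNReal.ofReal (exp ε)) Δ (μ.map toL1Plane) ↔ DPC ε Δ μ := by
  have preimage_image_add (S : Set (WithLp 1 (ℝ × ℝ))) (t : ℝ × ℝ) :
      toL1Plane ⁻¹' ((· + toL1Plane t) '' S) = (· + t) '' (toL1Plane ⁻¹' S) := by
    rw [Set.image_add_right, Set.image_add_right]
    rfl
  constructor
  · intro h S hS t ht
    obtain ⟨S, rfl⟩ := toL1Plane.injective.preimage_surjective S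
    rw [← norm_toL1Plane] at ht
    simpa only [toL1Plane.map_apply, preimage_image_add]
      using h S (toL1Plane.measurableSet_preimage.1 hS) _ ht
  · intro h S hS t ht
    obtain ⟨t, rfl⟩ := toL1Plane.surjective t
    rw [norm_toL1Plane] at ht
    rw [toL1Plane.map_apply, toL1Plane.map_apply, preimage_image_add]
    exact h _ (toL1Plane.measurable hS) t ht

lemma isDPProbability_map_toL1Plane_iff :
    IsDPProbability (ENNReal.ofReal (exp ε)) Δ (μ.map toL1Plane) ↔ MemP ε Δ μ :=
  and_congr (Measure.isProbabilityMeasure_map_iff toL1Plane.measurable.aemeasurable)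
    isDP_map_toL1Plane_iff

lemma map_withDensity_comp {α β : Type*} [MeasurableSpace α] [MeasurableSpace β] (e : α ≃ᵐ β)
    (μ : Measure α) (f : β → ℝ≥0∞) :
    (μ.withDensity fun x => f (e x)).map e = (μ.map e).withDensity f := by
  ext S hS
  rw [e.map_apply, withDensity_apply _ (e.measurable hS), withDensity_apply _ hS,
    e.restrict_map, lintegral_map_equiv]

lemma map_toL1Plane_eq_withDensity_iff {i : ℕ} {a : ℕ → ℝ≥0∞} :
    μ.map toL1Plane = (volume.map toL1Plane).withDensity (fun y => a (shellIdx (Δ / i) y)) ↔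
      HasDensitySeq Δ i μ a := by
  rw [← map_withDensity_comp, toL1Plane.map_measurableEquiv_injective.eq_iff, HasDensitySeq]
  simp only [shellIdx_toL1Plane]

lemma iInf_lintegral_enorm_eq_iInf_cost (P : Measure (WithLp 1 (ℝ × ℝ)) → Prop) :
    (⨅ (ν) (_ : P ν), ∫⁻ y, ‖y‖ₑ ∂ν) = ⨅ (μ) (_ : P (μ.map toL1Plane)), cost μ := by
  refine (Function.Surjective.iInf_congr (fun μ => μ.map toL1Plane)
    (fun ν => ⟨ν.map toL1Plane.symm, toL1Plane.map_map_symm⟩) fun μ => ?_).symm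
  simp only [lintegral_enorm_map_toL1Plane]

end Plane

/-- Lemma 3: the optimal cost V* over all ε-DP probability measures equals the
infimum over measures with layer-constant densities (over all resolutions i ≥ 1). -/
theorem Vstar_eq_inf_Psym (ε Δ : ℝ) (hε : 0 < ε) (hΔ : 0 < Δ) :
    (⨅ (μ : Measure (ℝ × ℝ)) (_ : MemP ε Δ μ), cost μ) =
    ⨅ (μ : Measure (ℝ × ℝ)) (_ : ∃ i : ℕ, 1 ≤ i ∧ MemPsym ε Δ i μ), cost μ := by
  simpa only [iInf_lintegral_enorm_eq_iInf_cost, isDPProbability_map_toL1Plane_iff,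
    map_toL1Plane_eq_withDensity_iff, MemPsym] using
    Vstar_eq_inf_Psym_general (volume.map toL1Plane) (ENNReal.ofReal (exp ε)) hΔ
end
end

section
/- For all ε > 0 and Δ > 0, V* = inf_{μ ∈ ⋃_{i≥1} 𝒫_i^{(b)}} V(μ); that is, in minimizing the expected ℓ¹ cost one may restrict to measures whose monotone layer-constant density sequence decays geometrically with ratio e^{−ε} per period i, i.e. a_k = e^ε · a_{k+i} for all k ∈ ℕ. (Lemma 5.) -/
open MeasureTheory Real Filter
open scoped ENNReal Topology

noncomputable section

/-!
Given `μ ∈ 𝒫` and `b > V(μ)`, we look for a member of some `𝒫_i^{(b)}` of cost less than `b`. Dilate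
`μ` by the factor `1 + 1/i`, which raises its sensitivity from `Δ` to `Δ + Δ/i`, convolve with the
uniform distribution on a small `ℓ¹` ball and average over `ℓ¹` spheres. The result has a density
`g(‖x‖₁)` whose profile `g` changes by at most the factor `e^ε` over distances up to `Δ + Δ/i`, and
its cost is less than some multiple `v = mΔ/i ≤ b` of the layer width once `i` is large.

The values of `g` on `[v, ∞)` determine a largest nonincreasing function that decays by `e^{-ε}` per
period `Δ` and stays below `g` there; sample it at the outer radii of the layers. This is at most
`g` on the layers outside radius `v`, and by the ratio bound at least `g` on the layers inside.
Passing from `g` to it can therefore only lower the integral of `‖x‖₁ - v`, which stays negative, so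
after normalization the cost is still less than `v`.
-/

/-- `RatioBounded C D f`: displacements of length at most `D` change `f` by a factor of at most `C`.
This is the differential-privacy constraint at the level of densities, with `C = e^ε`. -/
def RatioBounded {E : Type*} [Dist E] (C : ℝ≥0∞) (D : ℝ) (f : E → ℝ≥0∞) : Prop :=
  ∀ ⦃x y : E⦄, dist x y ≤ D → f x ≤ C * f y

namespace RatioBounded

lemma const_mul {E : Type*} [Dist E] {C : ℝ≥0∞} {D : ℝ} {f : E → ℝ≥0∞}
    (hf : RatioBounded C D f) (c : ℝ≥0∞) : RatioBounded C D (fun x => c * f x) := by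
  intro x y hxy
  calc c * f x ≤ c * (C * f y) := by gcongr; exact hf hxy
    _ = C * (c * f y) := mul_left_comm _ _ _

lemma pow {E : Type*} [NormedAddCommGroup E] [NormedSpace ℝ E] {C : ℝ≥0∞} {D : ℝ}
    {f : E → ℝ≥0∞} (hf : RatioBounded C D f) (n : ℕ) : RatioBounded (C ^ n) (n * D) f := by
  induction n with
  | zero =>
    intro x y hxy
    have : x = y := dist_le_zero.mp (by simpa using hxy)
    simp [this]
  | succ n ih =>
    intro x y hxy
    push_cast at hxy
    have hn : (0 : ℝ) < n + 1 := by positivity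
    have hdist : ((n : ℝ) + 1)⁻¹ * dist x y ≤ D := (inv_mul_le_iff₀ hn).mpr hxy
    set z : E := AffineMap.lineMap x y ((n : ℝ) + 1)⁻¹
    have hxz : dist x z ≤ D := by
      rwa [dist_left_lineMap, Real.norm_of_nonneg (by positivity)]
    have hzy : dist z y ≤ n * D := by
      rw [dist_lineMap_right, show 1 - ((n : ℝ) + 1)⁻¹ = n * ((n : ℝ) + 1)⁻¹ by field_simp; ring,
        Real.norm_of_nonneg (by positivity), mul_assoc]
      gcongr
    calc f x ≤ C * f z := hf hxz
      _ ≤ C * (C ^ n * f y) := by gcongr; exact ih hzy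
      _ = C ^ (n + 1) * f y := by rw [pow_succ', mul_assoc]

end RatioBounded

/-! ### Smoothing by balls -/

section BallDensity

lemma measurable_measure_ball {X : Type*} [PseudoMetricSpace X] [SecondCountableTopology X]
    [MeasurableSpace X] [OpensMeasurableSpace X] (μ : Measure X) [SFinite μ] (η : ℝ) :
    Measurable fun x => μ (Metric.ball x η) :=
  measurable_measure_prodMk_left (s := {p : X × X | dist p.2 p.1 < η})
    (measurableSet_lt (by fun_prop) measurable_const)

lemma lintegral_mul_measure_ball {X : Type*} [PseudoMetricSpace X] [SecondCountableTopology X]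
    [MeasurableSpace X] [OpensMeasurableSpace X] (lam μ : Measure X) [SFinite lam] [SFinite μ]
    (η : ℝ) {φ : X → ℝ≥0∞} (hφ : Measurable φ) :
    ∫⁻ x, φ x * μ (Metric.ball x η) ∂lam = ∫⁻ y, ∫⁻ x in Metric.ball y η, φ x ∂lam ∂μ := by
  have hT : MeasurableSet {p : X × X | dist p.2 p.1 < η} :=
    measurableSet_lt (by fun_prop) measurable_const
  have hF : Measurable ({p : X × X | dist p.2 p.1 < η}.indicator fun p => φ p.1) :=
    (hφ.comp measurable_fst).indicator hT
  calc ∫⁻ x, φ x * μ (Metric.ball x η) ∂lam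
      = ∫⁻ x, ∫⁻ y, {p : X × X | dist p.2 p.1 < η}.indicator (fun p => φ p.1) (x, y) ∂μ ∂lam := by
        refine lintegral_congr fun x => ?_
        rw [← setLIntegral_const, ← lintegral_indicator measurableSet_ball]
        rfl
    _ = ∫⁻ y, ∫⁻ x, {p : X × X | dist p.2 p.1 < η}.indicator (fun p => φ p.1) (x, y) ∂lam ∂μ :=
        lintegral_lintegral_swap hF.aemeasurable
    _ = ∫⁻ y, ∫⁻ x in Metric.ball y η, φ x ∂lam ∂μ := by
        refine lintegral_congr fun y => ?_
        rw [← lintegral_indicator measurableSet_ball]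
        refine lintegral_congr fun x => ?_
        simp only [Set.indicator, Set.mem_ofPred_eq, Metric.mem_ball, dist_comm]

variable {E : Type*} [NormedAddCommGroup E] [MeasurableSpace E]

/-- The density, with respect to a Haar measure `lam`, of the convolution of `μ` with the uniform
distribution on the ball of radius `η`. -/
def ballDensity (lam μ : Measure E) (η : ℝ) (x : E) : ℝ≥0∞ :=
  (lam (Metric.ball 0 η))⁻¹ * μ (Metric.ball x η)

lemma ballDensity_le (lam μ : Measure E) (η : ℝ) (x : E) :
    ballDensity lam μ η x ≤ (lam (Metric.ball 0 η))⁻¹ * μ Set.univ := by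
  unfold ballDensity
  gcongr
  exact Set.subset_univ _

variable [BorelSpace E] [ProperSpace E]

lemma inv_mul_lintegral_mul_measure_ball (lam μ : Measure E) [lam.IsAddHaarMeasure]
    {η : ℝ} (hη : 0 < η) (ψ : E → ℝ≥0∞) :
    (lam (Metric.ball 0 η))⁻¹ * ∫⁻ y, ψ y * lam (Metric.ball y η) ∂μ = ∫⁻ y, ψ y ∂μ := by
  have hpos : lam (Metric.ball 0 η) ≠ 0 := (Metric.measure_ball_pos lam 0 hη).ne'
  have hfin : lam (Metric.ball 0 η) ≠ ⊤ := measure_ball_lt_top.ne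
  simp_rw [Measure.addHaar_ball_center]
  rw [lintegral_mul_const' _ _ hfin, mul_comm, mul_assoc, ENNReal.mul_inv_cancel hpos hfin, mul_one]

variable (lam μ : Measure E) [SFinite μ]

lemma measurable_ballDensity (η : ℝ) : Measurable (ballDensity lam μ η) :=
  (measurable_measure_ball μ η).const_mul _

variable [lam.IsAddHaarMeasure] {η : ℝ}

lemma lintegral_mul_ballDensity {φ : E → ℝ≥0∞} (hφ : Measurable φ) :
    ∫⁻ x, φ x * ballDensity lam μ η x ∂lam =
      (lam (Metric.ball 0 η))⁻¹ * ∫⁻ y, ∫⁻ x in Metric.ball y η, φ x ∂lam ∂μ := by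
  have hmeas : Measurable fun x => φ x * μ (Metric.ball x η) :=
    hφ.mul (measurable_measure_ball μ η)
  rw [← lintegral_mul_measure_ball lam μ η hφ, ← lintegral_const_mul _ hmeas]
  exact lintegral_congr fun x => mul_left_comm _ _ _

lemma lintegral_ballDensity (hη : 0 < η) :
    ∫⁻ x, ballDensity lam μ η x ∂lam = μ Set.univ := by
  have h := lintegral_mul_ballDensity lam μ (η := η) (φ := fun _ => 1) measurable_const
  simp only [one_mul, setLIntegral_one] at h
  simpa [h] using inv_mul_lintegral_mul_measure_ball lam μ hη fun _ => 1

lemma lintegral_enorm_mul_ballDensity_le (hη : 0 < η) :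
    ∫⁻ x, ‖x‖ₑ * ballDensity lam μ η x ∂lam ≤
      ∫⁻ y, ‖y‖ₑ ∂μ + ENNReal.ofReal η * μ Set.univ := by
  have henorm : ∀ y : E, ∀ x ∈ Metric.ball y η, ‖x‖ₑ ≤ ‖y‖ₑ + ENNReal.ofReal η := by
    intro y x hx
    rw [← ofReal_norm, ← ofReal_norm, ← ENNReal.ofReal_add (norm_nonneg y) hη.le]
    gcongr
    linarith [norm_le_norm_add_norm_sub' x y, mem_ball_iff_norm.mp hx]
  calc ∫⁻ x, ‖x‖ₑ * ballDensity lam μ η x ∂lam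
      = (lam (Metric.ball 0 η))⁻¹ * ∫⁻ y, ∫⁻ x in Metric.ball y η, ‖x‖ₑ ∂lam ∂μ :=
        lintegral_mul_ballDensity lam μ measurable_enorm
    _ ≤ (lam (Metric.ball 0 η))⁻¹ *
          ∫⁻ y, (‖y‖ₑ + ENNReal.ofReal η) * lam (Metric.ball y η) ∂μ := by
        gcongr with y
        rw [← setLIntegral_const]
        exact setLIntegral_mono measurable_const (henorm y)
    _ = ∫⁻ y, (‖y‖ₑ + ENNReal.ofReal η) ∂μ := inv_mul_lintegral_mul_measure_ball lam μ hη _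
    _ = ∫⁻ y, ‖y‖ₑ ∂μ + ENNReal.ofReal η * μ Set.univ := by
        rw [lintegral_add_right _ measurable_const, lintegral_const]

end BallDensity

/-! ### Averaging over spheres -/

section RadialAverage

variable {E : Type*} [NormedAddCommGroup E] [NormedSpace ℝ E] [MeasurableSpace E]

/-- The mean of `f` over the sphere of radius `r`, with respect to the cone measure of `lam`. -/
def radialAverage (lam : Measure E) (f : E → ℝ≥0∞) (r : ℝ) : ℝ≥0∞ :=
  ⨍⁻ θ : Metric.sphere (0 : E) 1, f (r • (θ : E)) ∂lam.toSphere

lemma radialAverage_le (lam : Measure E) {f : E → ℝ≥0∞} {M : ℝ≥0∞} (hf : ∀ x, f x ≤ M) (r : ℝ) :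
    radialAverage lam f r ≤ M :=
  calc radialAverage lam f r ≤ ⨍⁻ _ : Metric.sphere (0 : E) 1, M ∂lam.toSphere :=
        laverage_mono_ae <| .of_forall fun _ => hf _
    _ ≤ M := by
        rw [laverage_eq, lintegral_const]
        exact ENNReal.div_le_of_le_mul le_rfl

lemma ratioBounded_radialAverage (lam : Measure E) {C : ℝ≥0∞} {D : ℝ} {f : E → ℝ≥0∞} (hC : C ≠ ⊤)
    (hf : RatioBounded C D f) : RatioBounded C D (radialAverage lam f) := by
  intro r s hrs
  have hdist (θ : Metric.sphere (0 : E) 1) : dist (r • θ.1) (s • θ.1) ≤ D := by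
    rwa [dist_eq_norm, ← sub_smul, norm_smul, norm_eq_of_mem_sphere, mul_one, ← dist_eq_norm]
  unfold radialAverage
  simp_rw [laverage_eq']
  rw [← lintegral_const_mul' _ _ hC]
  exact lintegral_mono fun θ => hf (hdist θ)

variable [BorelSpace E] [FiniteDimensional ℝ E] (lam : Measure E) [lam.IsAddHaarMeasure]

lemma lintegral_eq_lintegral_toSphere {f : E → ℝ≥0∞} (hf : Measurable f) [Nontrivial E] :
    ∫⁻ x, f x ∂lam = ∫⁻ r, ∫⁻ θ, f ((r : ℝ) • (θ : E)) ∂lam.toSphere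
      ∂(Measure.volumeIoiPow (Module.finrank ℝ E - 1)) := by
  have hpolar : ∀ x : ({0}ᶜ : Set E), f x =
      f ((homeomorphUnitSphereProd E x).2.1 • (homeomorphUnitSphereProd E x).1.1) := fun x => by
    simp [smul_smul, norm_ne_zero_iff.mpr x.2]
  calc ∫⁻ x, f x ∂lam = ∫⁻ x : ({0}ᶜ : Set E), f x ∂lam.comap (↑) := by
        rw [lintegral_subtype_comap (measurableSet_singleton _).compl f, restrict_compl_singleton]
    _ = ∫⁻ p, f (p.2.1 • p.1.1) ∂lam.toSphere.prod
          (Measure.volumeIoiPow (Module.finrank ℝ E - 1)) := by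
        simp_rw [hpolar]
        exact lam.measurePreserving_homeomorphUnitSphereProd.lintegral_comp_emb
          (Homeomorph.measurableEmbedding _) fun p => f (p.2.1 • p.1.1)
    _ = _ := lintegral_prod_symm' _ (hf.comp (by fun_prop))

lemma measurable_radialAverage {f : E → ℝ≥0∞} (hf : Measurable f) :
    Measurable (radialAverage lam f) :=
  Measurable.lintegral_prod_right' (f := fun p : ℝ × Metric.sphere (0 : E) 1 => f (p.1 • p.2.1))
    (hf.comp (by fun_prop))

lemma lintegral_mul_radialAverage_norm [Nontrivial E] {φ : ℝ → ℝ≥0∞} {f : E → ℝ≥0∞}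
    (hφ : Measurable φ) (hf : Measurable f) :
    ∫⁻ x, φ ‖x‖ * radialAverage lam f ‖x‖ ∂lam = ∫⁻ x, φ ‖x‖ * f x ∂lam := by
  have hg := measurable_radialAverage lam hf
  rw [lintegral_eq_lintegral_toSphere lam (by fun_prop),
    lintegral_eq_lintegral_toSphere lam (by fun_prop)]
  refine lintegral_congr fun r => ?_
  have hnorm (θ : Metric.sphere (0 : E) 1) : ‖(r : ℝ) • (θ : E)‖ = r := by
    rw [norm_smul, norm_eq_of_mem_sphere, mul_one, Real.norm_of_nonneg (le_of_lt r.2)]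
  simp_rw [hnorm]
  have hfr : Measurable fun θ : Metric.sphere (0 : E) 1 => f ((r : ℝ) • (θ : E)) :=
    hf.comp (by fun_prop)
  rw [lintegral_const, lintegral_const_mul _ hfr, mul_assoc, mul_comm _ (lam.toSphere _),
    radialAverage, measure_mul_laverage]

end RadialAverage

theorem RatioBounded.exists_radial_profile {E : Type*} [NormedAddCommGroup E] [NormedSpace ℝ E]
    [FiniteDimensional ℝ E] [Nontrivial E] [MeasurableSpace E] [BorelSpace E]
    (lam : Measure E) [lam.IsAddHaarMeasure] {μ : Measure E} [IsProbabilityMeasure μ] {C : ℝ≥0∞}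
    {D η : ℝ} (hμ : RatioBounded C D fun x => μ (Metric.ball x η)) (hC : C ≠ ⊤) (hη : 0 < η) :
    ∃ g : ℝ → ℝ≥0∞, Measurable g ∧ (∀ r, g r ≠ ⊤) ∧ RatioBounded C D g ∧
      ∫⁻ x, g ‖x‖ ∂lam = 1 ∧
      ∫⁻ x, ‖x‖ₑ * g ‖x‖ ∂lam ≤ ∫⁻ x, ‖x‖ₑ ∂μ + ENNReal.ofReal η := by
  have hf := measurable_ballDensity lam μ η
  refine ⟨radialAverage lam (ballDensity lam μ η), measurable_radialAverage lam hf, fun r => ?_,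
    ratioBounded_radialAverage lam hC (hμ.const_mul _), ?_, ?_⟩
  · refine ne_top_of_le_ne_top ?_ (radialAverage_le lam (ballDensity_le lam μ η) r)
    simpa using (Metric.measure_ball_pos lam 0 hη).ne'
  · have h := lintegral_mul_radialAverage_norm lam (φ := fun _ => 1) measurable_const hf
    simpa [lintegral_ballDensity lam μ hη] using h
  · have h := lintegral_mul_radialAverage_norm lam ENNReal.measurable_ofReal hf
    simp only [ofReal_norm] at h
    simpa [h] using lintegral_enorm_mul_ballDensity_le lam μ hη

/-! ### The ℓ¹ norm and the privacy constraint -/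

lemma l1_eq_norm (x : ℝ × ℝ) : l1 x = ‖WithLp.toLp 1 x‖ := by
  rw [WithLp.prod_norm_eq_of_L1]
  rfl

lemma l1_nonneg (x : ℝ × ℝ) : 0 ≤ l1 x := l1_eq_norm x ▸ norm_nonneg _

lemma l1_add_le (x y : ℝ × ℝ) : l1 (x + y) ≤ l1 x + l1 y := by
  simpa only [l1_eq_norm, WithLp.toLp_add] using norm_add_le _ _

lemma l1_smul (r : ℝ) (x : ℝ × ℝ) : l1 (r • x) = |r| * l1 x := by
  rw [l1_eq_norm, l1_eq_norm, WithLp.toLp_smul, norm_smul, Real.norm_eq_abs]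

lemma measurable_l1 : Measurable l1 := by
  unfold l1
  fun_prop

lemma volume_l1_lt_lt_top (v : ℝ) : volume {x : ℝ × ℝ | l1 x < v} < ⊤ := by
  refine (measure_mono fun x hx => ?_).trans_lt (measure_ball_lt_top (x := (0 : ℝ × ℝ)) (r := v))
  have hx : |x.1| + |x.2| < v := hx
  rw [mem_ball_zero_iff, Prod.norm_def, max_lt_iff, Real.norm_eq_abs, Real.norm_eq_abs]
  constructor <;> linarith [abs_nonneg x.1, abs_nonneg x.2]

lemma DPC.ratioBounded_map_ball {ε D : ℝ} {μ : Measure (ℝ × ℝ)} (hμ : DPC ε D μ) (η : ℝ) :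
    RatioBounded (ENNReal.ofReal (Real.exp ε)) D
      fun x => μ.map (WithLp.toLp 1) (Metric.ball x η) := by
  intro x y hxy
  have hmeas : Measurable (WithLp.toLp 1 : ℝ × ℝ → _) := WithLp.measurable_toLp 1 _
  have himage : (· + (y - x).ofLp) '' (WithLp.toLp 1 ⁻¹' Metric.ball x η) =
      WithLp.toLp 1 ⁻¹' Metric.ball y η := by
    ext z
    rw [Set.image_add_right, Set.mem_preimage, Set.mem_preimage, Set.mem_preimage,
      mem_ball_iff_norm, mem_ball_iff_norm]
    congr! 2
    simp only [WithLp.toLp_add, WithLp.toLp_neg, WithLp.toLp_ofLp]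
    abel
  have hshift : l1 (y - x).ofLp ≤ D := by
    rwa [l1_eq_norm, WithLp.toLp_ofLp, ← dist_eq_norm, dist_comm]
  simp_rw [Measure.map_apply hmeas measurableSet_ball]
  rw [← himage]
  exact hμ _ (hmeas measurableSet_ball) _ hshift

lemma MemP.exists_radial_profile {ε D η : ℝ} {μ : Measure (ℝ × ℝ)} (hμ : MemP ε D μ)
    (hη : 0 < η) :
    ∃ g : ℝ → ℝ≥0∞, Measurable g ∧ (∀ r, g r ≠ ⊤) ∧
      RatioBounded (ENNReal.ofReal (Real.exp ε)) D g ∧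
      ∫⁻ x, g (l1 x) = 1 ∧
      ∫⁻ x, ENNReal.ofReal (l1 x) * g (l1 x) ≤ cost μ + ENNReal.ofReal η := by
  let e := (WithLp.prodContinuousLinearEquiv 1 ℝ ℝ ℝ).symm
  have he : MeasurableEmbedding (WithLp.toLp 1 : ℝ × ℝ → _) := e.toHomeomorph.measurableEmbedding
  have : ((volume : Measure (ℝ × ℝ)).map (WithLp.toLp 1)).IsAddHaarMeasure :=
    e.isAddHaarMeasure_map volume
  have : Nontrivial (WithLp 1 (ℝ × ℝ)) := e.symm.toEquiv.nontrivial
  have := hμ.1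
  have := Measure.isProbabilityMeasure_map (μ := μ) he.measurable.aemeasurable
  simpa only [cost, he.lintegral_map, ← ofReal_norm, ← l1_eq_norm] using
    (hμ.2.ratioBounded_map_ball η).exists_radial_profile (volume.map (WithLp.toLp 1))
      ENNReal.ofReal_ne_top hη

lemma MemP.map_smul {ε Δ lam : ℝ} {μ : Measure (ℝ × ℝ)} (hμ : MemP ε Δ μ) (hlam : 0 < lam) :
    MemP ε (lam * Δ) (μ.map (lam • ·)) := by
  have := hμ.1
  have he : MeasurableEmbedding fun x : ℝ × ℝ => lam • x := measurableEmbedding_const_smul₀ hlam.ne'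
  refine ⟨Measure.isProbabilityMeasure_map he.measurable.aemeasurable, fun S hS t ht => ?_⟩
  have hpreimage : (lam • ·) ⁻¹' ((· + t) '' S) = (· + lam⁻¹ • t) '' ((lam • ·) ⁻¹' S) := by
    ext x
    simp [Set.image_add_right, smul_smul, hlam.ne']
  have hshift : l1 (lam⁻¹ • t) ≤ Δ := by
    rwa [l1_smul, abs_of_pos (inv_pos.mpr hlam), inv_mul_le_iff₀ hlam]
  rw [he.map_apply, he.map_apply, hpreimage]
  exact hμ.2 _ (he.measurable hS) _ hshift

lemma cost_map_smul {lam : ℝ} (hlam : 0 ≤ lam) (μ : Measure (ℝ × ℝ)) :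
    cost (μ.map (lam • ·)) = ENNReal.ofReal lam * cost μ := by
  have hl1 : Measurable fun x => ENNReal.ofReal (l1 x) := measurable_l1.ennreal_ofReal
  unfold cost
  rw [lintegral_map hl1 (measurable_const_smul lam), ← lintegral_const_mul _ hl1]
  simp_rw [l1_smul, abs_of_nonneg hlam, ENNReal.ofReal_mul hlam]

/-! ### Layered densities -/

section Layers

variable {ε Δ : ℝ} {i : ℕ}

lemma measurable_layerIdx (Δ : ℝ) (i : ℕ) : Measurable (layerIdx Δ i) :=
  Nat.measurable_floor.comp ((measurable_l1.mul_const _).div_const _)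

lemma measurable_comp_layerIdx (Δ : ℝ) (i : ℕ) (a : ℕ → ℝ≥0∞) :
    Measurable fun x => a (layerIdx Δ i x) :=
  (measurable_from_top (f := a)).comp (measurable_layerIdx Δ i)

lemma layerIdx_mul_le_l1 (hΔ : 0 < Δ) (hi : 0 < i) (x : ℝ × ℝ) :
    layerIdx Δ i x * (Δ / i) ≤ l1 x := by
  have hwidth : 0 < Δ / i := by positivity
  have hx := l1_nonneg x
  rw [← le_div_iff₀ hwidth, div_div_eq_mul_div]
  exact Nat.floor_le (by positivity)

lemma l1_lt_layerIdx_add_one_mul (hΔ : 0 < Δ) (hi : 0 < i) (x : ℝ × ℝ) :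
    l1 x < (layerIdx Δ i x + 1) * (Δ / i) := by
  have hwidth : 0 < Δ / i := by positivity
  rw [← div_lt_iff₀ hwidth, div_div_eq_mul_div]
  exact Nat.lt_floor_add_one _

lemma layerIdx_add_le (hΔ : 0 < Δ) {x t : ℝ × ℝ} (ht : l1 t ≤ Δ) :
    layerIdx Δ i (x + t) ≤ layerIdx Δ i x + i := by
  have hx := l1_nonneg x
  unfold layerIdx
  rw [← Nat.floor_add_natCast (by positivity)]
  gcongr
  calc l1 (x + t) * i / Δ ≤ (l1 x + Δ) * i / Δ := by
        gcongr
        linarith [l1_add_le x t]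
    _ = l1 x * i / Δ + i := by field_simp

variable {μ : Measure (ℝ × ℝ)} {a : ℕ → ℝ≥0∞}

lemma HasDensitySeq.smul (h : HasDensitySeq Δ i μ a) (c : ℝ≥0∞) :
    HasDensitySeq Δ i (c • μ) fun k => c * a k := by
  rw [HasDensitySeq] at h ⊢
  rw [h, ← withDensity_smul c (measurable_comp_layerIdx Δ i a)]
  rfl

lemma HasDensitySeq.measure_univ (h : HasDensitySeq Δ i μ a) :
    μ Set.univ = ∫⁻ x, a (layerIdx Δ i x) := by
  rw [h, withDensity_apply _ MeasurableSet.univ, Measure.restrict_univ]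

lemma HasDensitySeq.cost_eq (h : HasDensitySeq Δ i μ a) :
    cost μ = ∫⁻ x, ENNReal.ofReal (l1 x) * a (layerIdx Δ i x) := by
  rw [h, cost, lintegral_withDensity_eq_lintegral_mul _ (measurable_comp_layerIdx Δ i a)
    measurable_l1.ennreal_ofReal]
  exact lintegral_congr fun x => mul_comm _ _

lemma HasDensitySeq.dpc (h : HasDensitySeq Δ i μ a) (hΔ : 0 < Δ) (ha : Antitone a)
    (hgeom : ∀ k, a k = ENNReal.ofReal (Real.exp ε) * a (k + i)) : DPC ε Δ μ := by
  intro S hS t ht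
  have hembed : MeasurableEmbedding (· + t : ℝ × ℝ → ℝ × ℝ) := measurableEmbedding_addRight t
  have hdecay (x : ℝ × ℝ) :
      a (layerIdx Δ i x) ≤ ENNReal.ofReal (Real.exp ε) * a (layerIdx Δ i (x + t)) := by
    rw [hgeom (layerIdx Δ i x)]
    gcongr
    exact ha (layerIdx_add_le hΔ ht)
  rw [h, withDensity_apply _ hS, withDensity_apply _ (hembed.measurableSet_image.mpr hS),
    ← (measurePreserving_add_right volume t).setLIntegral_comp_emb hembed,
    ← lintegral_const_mul' _ _ ENNReal.ofReal_ne_top]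
  exact lintegral_mono hdecay

lemma HasDensitySeq.memPb_normalize (h : HasDensitySeq Δ i μ a) (hΔ : 0 < Δ) (ha : Antitone a)
    (hgeom : ∀ k, a k = ENNReal.ofReal (Real.exp ε) * a (k + i)) (h0 : μ Set.univ ≠ 0)
    (hfin : μ Set.univ ≠ ⊤) : MemPb ε Δ i ((μ Set.univ)⁻¹ • μ) := by
  have hanti : Antitone fun k => (μ Set.univ)⁻¹ * a k := fun k l hkl => by
    dsimp only
    gcongr
    exact ha hkl
  have hgeom' (k : ℕ) : (μ Set.univ)⁻¹ * a k =
      ENNReal.ofReal (Real.exp ε) * ((μ Set.univ)⁻¹ * a (k + i)) := by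
    rw [hgeom k, mul_left_comm]
  exact ⟨⟨⟨ENNReal.inv_mul_cancel h0 hfin⟩, (h.smul _).dpc hΔ hanti hgeom'⟩, _, h.smul _, hanti,
    hgeom'⟩

end Layers

/-! ### The geometric envelope of a profile -/

section GeomEnvelope

variable {C : ℝ≥0∞} {Δ δ v r s t u : ℝ} {g : ℝ → ℝ≥0∞}

/-- The largest antitone function `h` with `h s = C * h (s + Δ)` that lies below `g r` at every `s`
with `v ≤ r < s`. Each value `g r` with `v ≤ r` is carried over to the radii `r + nΔ`, `n ∈ ℤ`, with
the factor `C⁻ⁿ`, and the infimum is taken over what is carried to radii below `s`. -/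
def geomEnvelope (C : ℝ≥0∞) (Δ v : ℝ) (g : ℝ → ℝ≥0∞) (s : ℝ) : ℝ≥0∞ :=
  ⨅ (n : ℤ) (r : ℝ) (_ : v ≤ r ∧ r + n * Δ < s), C ^ (-n) * g r

lemma geomEnvelope_antitone (C : ℝ≥0∞) (Δ v : ℝ) (g : ℝ → ℝ≥0∞) :
    Antitone (geomEnvelope C Δ v g) := fun _ _ hst =>
  iInf_mono fun _ => iInf_mono fun _ => iInf_mono' fun h => ⟨⟨h.1, h.2.trans_le hst⟩, le_rfl⟩

lemma geomEnvelope_eq_mul_add (h0 : C ≠ 0) (hC : C ≠ ⊤) :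
    geomEnvelope C Δ v g s = C * geomEnvelope C Δ v g (s + Δ) := by
  unfold geomEnvelope
  simp_rw [ENNReal.mul_iInf_of_ne h0 hC]
  refine (Equiv.addRight (1 : ℤ)).iInf_congr fun n => iInf_congr fun r => ?_
  refine iInf_congr_Prop ?_ fun _ => ?_
  · simp only [Equiv.coe_addRight, Int.cast_add, Int.cast_one, add_one_mul, ← add_assoc,
      add_lt_add_iff_right]
  · rw [Equiv.coe_addRight, ← mul_assoc, show -n = 1 + -(n + 1) by ring, ENNReal.zpow_add h0 hC,
      zpow_one]

lemma geomEnvelope_le (hvr : v ≤ r) (hrs : r < s) : geomEnvelope C Δ v g s ≤ g r :=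
  (iInf_le_of_le 0 <| iInf₂_le r ⟨hvr, by simpa using hrs⟩).trans_eq (by simp)

lemma le_geomEnvelope (hΔ : 0 < Δ) (hg : RatioBounded C (Δ + δ) g) (hus : u ≤ s)
    (hsu : s ≤ u + δ) (hsv : s ≤ v) : g u ≤ geomEnvelope C Δ v g s := by
  refine le_iInf fun n => le_iInf₂ fun r ⟨hvr, hrs⟩ => ?_
  have hn : n < 0 := by
    have : (n : ℝ) * Δ < 0 := by linarith
    exact_mod_cast neg_of_mul_neg_left this hΔ.le
  obtain ⟨N, rfl⟩ : ∃ N : ℕ, n = -N := ⟨n.natAbs, by omega⟩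
  have hN : (1 : ℝ) ≤ N := by exact_mod_cast (by omega : 1 ≤ N)
  have hdist : dist u r ≤ N * (Δ + δ) := by
    push_cast at hrs
    rw [Real.dist_eq, abs_sub_comm, abs_of_nonneg (by linarith)]
    nlinarith
  rw [neg_neg, zpow_natCast]
  exact hg.pow N hdist

lemma geomEnvelope_ne_top (hΔ : 0 < Δ) (hC : C ≠ ⊤) (hg : g v ≠ ⊤) :
    geomEnvelope C Δ v g s ≠ ⊤ := by
  obtain ⟨N, hN⟩ := exists_nat_gt ((v - s) / Δ)
  rw [div_lt_iff₀ hΔ] at hN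
  have hle : geomEnvelope C Δ v g s ≤ C ^ (-(-N : ℤ)) * g v :=
    iInf_le_of_le (-N : ℤ) <| iInf₂_le v ⟨le_rfl, by push_cast; linarith⟩
  refine ne_top_of_le_ne_top ?_ hle
  rw [neg_neg, zpow_natCast]
  finiteness

end GeomEnvelope

section EnvelopeSeq

variable {ε Δ : ℝ} {i m : ℕ} {g : ℝ → ℝ≥0∞} {x : ℝ × ℝ}

/-- The values of the geometric envelope with ratio `e^ε` at the outer radii of the `ℓ¹` layers,
with the threshold at the inner radius `mΔ/i` of the `m`-th layer. -/
def envelopeSeq (ε Δ : ℝ) (i m : ℕ) (g : ℝ → ℝ≥0∞) (k : ℕ) : ℝ≥0∞ :=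
  geomEnvelope (ENNReal.ofReal (Real.exp ε)) Δ (m * (Δ / i)) g ((k + 1) * (Δ / i))

lemma envelopeSeq_antitone (hΔ : 0 < Δ) : Antitone (envelopeSeq ε Δ i m g) := fun k l hkl =>
  geomEnvelope_antitone _ _ _ _ (by gcongr)

lemma envelopeSeq_geometric (hi : 0 < i) (k : ℕ) :
    envelopeSeq ε Δ i m g k = ENNReal.ofReal (Real.exp ε) * envelopeSeq ε Δ i m g (k + i) := by
  have hperiod : ((k + i : ℕ) + 1 : ℝ) * (Δ / i) = (k + 1) * (Δ / i) + Δ := by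
    push_cast
    field_simp
    ring
  unfold envelopeSeq
  rw [hperiod]
  exact geomEnvelope_eq_mul_add (ENNReal.ofReal_pos.mpr (Real.exp_pos ε)).ne' ENNReal.ofReal_ne_top

lemma envelopeSeq_layerIdx_le (hΔ : 0 < Δ) (hi : 0 < i) (hx : m * (Δ / i) ≤ l1 x) :
    envelopeSeq ε Δ i m g (layerIdx Δ i x) ≤ g (l1 x) :=
  geomEnvelope_le hx (l1_lt_layerIdx_add_one_mul hΔ hi x)

lemma le_envelopeSeq_layerIdx (hΔ : 0 < Δ) (hi : 0 < i)
    (hg : RatioBounded (ENNReal.ofReal (Real.exp ε)) (Δ + Δ / i) g) (hx : l1 x < m * (Δ / i)) :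
    g (l1 x) ≤ envelopeSeq ε Δ i m g (layerIdx Δ i x) := by
  have hwidth : 0 < Δ / i := by positivity
  have hinner := layerIdx_mul_le_l1 hΔ hi x
  have houter := l1_lt_layerIdx_add_one_mul hΔ hi x
  have hlayer : layerIdx Δ i x + 1 ≤ m := by
    have := lt_of_mul_lt_mul_right (hinner.trans_lt hx) hwidth.le
    exact_mod_cast this
  refine le_geomEnvelope hΔ hg houter.le (by linarith) ?_
  gcongr
  exact_mod_cast hlayer

lemma lintegral_envelopeSeq_ne_top (hΔ : 0 < Δ) (hi : 0 < i) (hg : ∀ r, g r ≠ ⊤)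
    (hint : ∫⁻ x, g (l1 x) ≠ ⊤) : ∫⁻ x, envelopeSeq ε Δ i m g (layerIdx Δ i x) ≠ ⊤ := by
  have hball : MeasurableSet {x | l1 x < m * (Δ / i)} :=
    measurableSet_lt measurable_l1 measurable_const
  have hzero : envelopeSeq ε Δ i m g 0 ≠ ⊤ := geomEnvelope_ne_top hΔ ENNReal.ofReal_ne_top (hg _)
  have hvol := (volume_l1_lt_lt_top (m * (Δ / i))).ne
  rw [← lintegral_add_compl _ hball]
  refine ENNReal.add_ne_top.mpr ⟨ne_top_of_le_ne_top (ENNReal.mul_ne_top hzero hvol) ?_,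
    ne_top_of_le_ne_top hint ?_⟩
  · rw [← setLIntegral_const]
    exact lintegral_mono fun x => envelopeSeq_antitone hΔ (Nat.zero_le _)
  · refine (setLIntegral_mono' hball.compl fun x hx => ?_).trans (setLIntegral_le_lintegral _ _)
    exact envelopeSeq_layerIdx_le hΔ hi (not_lt.mp hx)

end EnvelopeSeq

/-! ### Lowering the cost below a threshold -/

lemma mul_add_mul_le_mul_add_mul_of_canonicallyOrdered {R : Type*} [CommSemiring R] [PartialOrder R]
    [CanonicallyOrderedAdd R] {a b c d : R} (hab : a ≤ b) (hcd : c ≤ d) :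
    a * d + b * c ≤ a * c + b * d := by
  obtain ⟨x, rfl⟩ := exists_add_of_le hab
  obtain ⟨y, rfl⟩ := exists_add_of_le hcd
  calc a * (c + y) + (a + x) * c ≤ a * (c + y) + (a + x) * c + x * y := le_self_add
    _ = a * c + (a + x) * (c + y) := by ring

lemma lintegral_mul_lt_of_crossing {α : Type*} [MeasurableSpace α] {μ : Measure α}
    {w p q : α → ℝ≥0∞} {t : ℝ≥0∞} (hq : Measurable q) (ht : t ≠ ⊤)
    (hlow : ∀ x, w x < t → p x ≤ q x) (hhigh : ∀ x, t ≤ w x → q x ≤ p x)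
    (hq_fin : ∫⁻ x, q x ∂μ ≠ ⊤) (hlt : ∫⁻ x, w x * p x ∂μ < t * ∫⁻ x, p x ∂μ) :
    ∫⁻ x, w x * q x ∂μ < t * ∫⁻ x, q x ∂μ := by
  -- `(w - t) * (q - p) ≤ 0`, rearranged so that no subtraction occurs
  have hrearrange (x : α) : w x * q x + t * p x ≤ w x * p x + t * q x := by
    rcases lt_or_ge (w x) t with h | h
    · exact mul_add_mul_le_mul_add_mul_of_canonicallyOrdered h.le (hlow x h)
    · rw [add_comm, add_comm (w x * p x)]
      exact mul_add_mul_le_mul_add_mul_of_canonicallyOrdered h (hhigh x h)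
  refine lt_of_add_lt_add_right (a := t * ∫⁻ x, p x ∂μ) ?_
  calc ∫⁻ x, w x * q x ∂μ + t * ∫⁻ x, p x ∂μ
      ≤ ∫⁻ x, w x * q x + t * p x ∂μ := by
        rw [← lintegral_const_mul' _ _ ht]
        exact le_lintegral_add _ _
    _ ≤ ∫⁻ x, w x * p x + t * q x ∂μ := lintegral_mono hrearrange
    _ = ∫⁻ x, w x * p x ∂μ + t * ∫⁻ x, q x ∂μ := by
        rw [lintegral_add_right _ (hq.const_mul t), lintegral_const_mul' _ _ ht]
    _ < t * ∫⁻ x, p x ∂μ + t * ∫⁻ x, q x ∂μ :=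
        ENNReal.add_lt_add_right (ENNReal.mul_ne_top ht hq_fin) hlt
    _ = t * ∫⁻ x, q x ∂μ + t * ∫⁻ x, p x ∂μ := add_comm _ _

lemma exists_memPb_cost_lt_of_profile {ε Δ : ℝ} {i m : ℕ} {g : ℝ → ℝ≥0∞} (hΔ : 0 < Δ)
    (hi : 0 < i) (hg_fin : ∀ r, g r ≠ ⊤)
    (hg : RatioBounded (ENNReal.ofReal (Real.exp ε)) (Δ + Δ / i) g)
    (hmass : ∫⁻ x, g (l1 x) = 1)
    (hcost : ∫⁻ x, ENNReal.ofReal (l1 x) * g (l1 x) < ENNReal.ofReal (m * (Δ / i))) :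
    ∃ ν, MemPb ε Δ i ν ∧ cost ν < ENNReal.ofReal (m * (Δ / i)) := by
  set v : ℝ := m * (Δ / i)
  have hv : 0 < v := ENNReal.ofReal_pos.mp (bot_le.trans_lt hcost)
  set a := envelopeSeq ε Δ i m g
  have hseq : HasDensitySeq Δ i (volume.withDensity fun x => a (layerIdx Δ i x)) a := rfl
  set μ := volume.withDensity fun x => a (layerIdx Δ i x)
  have hfin : μ Set.univ ≠ ⊤ := by
    rw [hseq.measure_univ]
    exact lintegral_envelopeSeq_ne_top hΔ hi hg_fin (by simp [hmass])
  have hlt : cost μ < ENNReal.ofReal v * μ Set.univ := by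
    rw [hseq.measure_univ] at hfin ⊢
    rw [hseq.cost_eq]
    refine lintegral_mul_lt_of_crossing (p := fun x => g (l1 x))
      (measurable_comp_layerIdx Δ i a) ENNReal.ofReal_ne_top (fun x hx => ?_)
      (fun x hx => ?_) hfin (by simpa [hmass] using hcost)
    · exact le_envelopeSeq_layerIdx hΔ hi hg ((ENNReal.ofReal_lt_ofReal_iff hv).mp hx)
    · exact envelopeSeq_layerIdx_le hΔ hi ((ENNReal.ofReal_le_ofReal_iff (l1_nonneg x)).mp hx)
  have h0 : μ Set.univ ≠ 0 := fun h => by simp [h] at hlt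
  refine ⟨_, hseq.memPb_normalize hΔ (envelopeSeq_antitone hΔ) (envelopeSeq_geometric hi) h0 hfin,
    ?_⟩
  rw [cost, lintegral_smul_measure, smul_eq_mul, mul_comm, ← div_eq_mul_inv]
  exact ENNReal.div_lt_of_lt_mul hlt

lemma exists_layer_between {Δ b c : ℝ} (hΔ : 0 < Δ) (hc : 0 ≤ c) (hcb : c < b) :
    ∃ i m : ℕ, ∃ η > 0, 0 < i ∧ (1 + 1 / i) * c + η < m * (Δ / i) ∧ m * (Δ / i) ≤ b := by
  have hbc : 0 < b - c := sub_pos.mpr hcb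
  obtain ⟨i, hi⟩ := exists_nat_gt (2 * (c + Δ) / (b - c))
  have hi0 : (0 : ℝ) < i := lt_of_le_of_lt (by positivity) hi
  have hwidth : 0 < Δ / i := by positivity
  have hfine : (c + Δ) / i < (b - c) / 2 := by
    rw [div_lt_iff₀ hbc] at hi
    rw [div_lt_iff₀ hi0]
    linarith
  set y : ℝ := (1 + 1 / i) * c + (b - c) / 2 with hy
  have hfloor : (⌊y / (Δ / i)⌋₊ : ℝ) * (Δ / i) ≤ y := by
    rw [← le_div_iff₀ hwidth]
    exact Nat.floor_le (by positivity)
  refine ⟨i, ⌊y / (Δ / i)⌋₊ + 1, (b - c) / 2, by linarith, by exact_mod_cast hi0, ?_, ?_⟩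
  · rw [← div_lt_iff₀ hwidth]
    exact_mod_cast Nat.lt_floor_add_one _
  · have hsplit : (c + Δ) / i = 1 / i * c + Δ / i := by ring
    push_cast
    linarith

lemma MemP.exists_memPb_cost_lt {ε Δ : ℝ} {μ : Measure (ℝ × ℝ)} {b : ℝ≥0∞} (hΔ : 0 < Δ)
    (hμ : MemP ε Δ μ) (hb : cost μ < b) :
    ∃ i : ℕ, 1 ≤ i ∧ ∃ ν, MemPb ε Δ i ν ∧ cost ν < b := by
  obtain ⟨b', -, hcb', hb'b⟩ := ENNReal.lt_iff_exists_real_btwn.mp hb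
  obtain ⟨c, hc0, hcost⟩ : ∃ c : ℝ, 0 ≤ c ∧ cost μ = ENNReal.ofReal c :=
    ⟨_, ENNReal.toReal_nonneg, (ENNReal.ofReal_toReal hcb'.ne_top).symm⟩
  have hcb : c < b' := (ENNReal.ofReal_lt_ofReal_iff_of_nonneg hc0).mp (hcost ▸ hcb')
  obtain ⟨i, m, η, hη, hi, hlower, hupper⟩ := exists_layer_between hΔ hc0 hcb
  have hscale : (0 : ℝ) < 1 + 1 / i := by positivity
  obtain ⟨g, -, hg_fin, hg, hmass, hg_cost⟩ := (hμ.map_smul hscale).exists_radial_profile hη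
  have hsens : (1 + 1 / (i : ℝ)) * Δ = Δ + Δ / i := by ring
  rw [hsens] at hg
  rw [cost_map_smul hscale.le, hcost, ← ENNReal.ofReal_mul hscale.le,
    ← ENNReal.ofReal_add (by positivity) hη.le] at hg_cost
  have hpos : 0 < m * (Δ / i) := lt_of_le_of_lt (by positivity) hlower
  obtain ⟨ν, hν, hν_cost⟩ := exists_memPb_cost_lt_of_profile hΔ hi hg_fin hg hmass
    (hg_cost.trans_lt ((ENNReal.ofReal_lt_ofReal_iff hpos).mpr hlower))
  exact ⟨i, hi, ν, hν, (hν_cost.trans_le (ENNReal.ofReal_le_ofReal hupper)).trans hb'b⟩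

/-- Lemma 5: the optimal cost V* equals the infimum over measures with
layer-constant, nonincreasing, geometrically decaying density sequences
(a_k = e^ε · a_{k+i} for all k). -/
theorem Vstar_eq_inf_Pb (ε Δ : ℝ) (hε : 0 < ε) (hΔ : 0 < Δ) :
    (⨅ (μ : Measure (ℝ × ℝ)) (_ : MemP ε Δ μ), cost μ) =
    ⨅ (μ : Measure (ℝ × ℝ)) (_ : ∃ i : ℕ, 1 ≤ i ∧ MemPb ε Δ i μ), cost μ := by
  apply le_antisymm
  · exact le_iInf₂ fun μ ⟨_, _, hμ⟩ => iInf₂_le μ hμ.1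
  · refine le_iInf₂ fun μ hμ => le_of_forall_gt fun b hb => ?_
    obtain ⟨i, hi, ν, hν, hν_cost⟩ := hμ.exists_memPb_cost_lt hΔ hb
    exact (iInf₂_le ν ⟨i, hi, hν⟩).trans_lt hν_cost
end
end
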